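/- Fix constants c̃ ≥ 0, λ > 0, μ ∈ (0,1], and a real q ≥ 1. Then there exists a constant C > 0, depending only on c̃, λ, μ and q, with the following property: for every probability space (Ω, 𝔽, ℙ), every A ∈ (0,1], every m ≥ 0, and every nonnegative random variable Y on Ω such that ℙ(Y < 1/y) ≤ c̃ · exp(−λ (A y)^μ / (1+m)²) for all y ≥ 1/A, one has E[Y^{−q}] ≤ C · A^{−q} · (1+m)^{2q/μ + 2} (where Y^{−q} is interpreted as +∞ on {Y = 0} and the expectation is a Lebesgue integral with values in [0,∞]). -/

import Mathlib

open MeasureTheory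

/-!
Put `B = A⁻¹ (1 + m) ^ (2 / μ)`. At the points `y = B t`, `t ≥ 1`, the exponent
`λ (A y) ^ μ / (1 + m) ^ 2` equals `λ t ^ μ`, so the hypothesis becomes the tail bound
`P (X > t) ≤ c exp (-λ t ^ μ)` for `X = (B Y)⁻¹`, free of `A` and `m`. In the layer-cake formula
for `E[X ^ q]`, the levels `t ≤ 1` contribute at most `1` and the levels `t > 1` at most a Gamma
integral. Hence `E[Y ^ (-q)] = B ^ q E[X ^ q]` is at most `B ^ q` times an explicit constant.
-/

open Set
open scoped ENNReal

section LayerCake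

lemma lintegral_Ioc_zero_one_rpow_sub_one {p : ℝ} (hp : 0 < p) :
    ∫⁻ t in Ioc (0 : ℝ) 1, ENNReal.ofReal (t ^ (p - 1)) = ENNReal.ofReal (1 / p) := by
  have hexp : -1 < p - 1 := by linarith
  have hintegrable : IntegrableOn (fun t : ℝ => t ^ (p - 1)) (Ioc 0 1) :=
    (intervalIntegrable_iff_integrableOn_Ioc_of_le zero_le_one).1
      (intervalIntegral.intervalIntegrable_rpow' hexp)
  have hnonneg : 0 ≤ᵐ[volume.restrict (Ioc (0 : ℝ) 1)] fun t => t ^ (p - 1) :=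
    ae_restrict_of_forall_mem measurableSet_Ioc fun t ht => Real.rpow_nonneg ht.1.le _
  rw [← ofReal_integral_eq_lintegral_ofReal hintegrable hnonneg,
    ← intervalIntegral.integral_of_le zero_le_one, integral_rpow (Or.inl hexp), sub_add_cancel,
    Real.one_rpow, Real.zero_rpow hp.ne', sub_zero]

lemma lintegral_Ioi_zero_rpow_eq_top (s : ℝ) :
    ∫⁻ t in Ioi (0 : ℝ), ENNReal.ofReal (t ^ s) = ∞ := by
  have hnonneg : 0 ≤ᵐ[volume.restrict (Ioi (0 : ℝ))] fun t => t ^ s :=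
    ae_restrict_of_forall_mem measurableSet_Ioi fun t ht => Real.rpow_nonneg (le_of_lt ht) _
  by_contra hfin
  have hmeas : AEStronglyMeasurable (fun t : ℝ => t ^ s) (volume.restrict (Ioi 0)) :=
    (measurable_id.pow_const s).aestronglyMeasurable
  exact not_integrableOn_Ioi_rpow s ((lintegral_ofReal_ne_top_iff_integrable hmeas hnonneg).1 hfin)

variable {α : Type*} [MeasurableSpace α] {μ : Measure α} {f : α → ℝ≥0∞}

lemma lintegral_rpow_eq_lintegral_meas_ofReal_lt_mul (hf : AEMeasurable f μ) {p : ℝ} (hp : 0 < p) :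
    ∫⁻ a, f a ^ p ∂μ = ENNReal.ofReal p *
      ∫⁻ t in Ioi (0 : ℝ), μ {a | ENNReal.ofReal t < f a} * ENNReal.ofReal (t ^ (p - 1)) := by
  by_cases hfin : ∀ᵐ a ∂μ, f a ≠ ∞
  · have hmeas (t : ℝ) (ht : t ∈ Ioi 0) :
        μ {a | t < (f a).toReal} = μ {a | ENNReal.ofReal t < f a} :=
      measure_congr <| hfin.mono fun a ha =>
        propext (ENNReal.ofReal_lt_iff_lt_toReal (le_of_lt ht) ha).symm
    calc ∫⁻ a, f a ^ p ∂μ = ∫⁻ a, ENNReal.ofReal ((f a).toReal ^ p) ∂μ :=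
          lintegral_congr_ae <| hfin.mono fun a ha => by
            simp only [← ENNReal.ofReal_rpow_of_nonneg ENNReal.toReal_nonneg hp.le,
              ENNReal.ofReal_toReal ha]
      _ = _ := by
          rw [lintegral_rpow_eq_lintegral_meas_lt_mul μ
            (Filter.Eventually.of_forall fun _ => ENNReal.toReal_nonneg) hf.ennreal_toReal hp]
          congr 1
          exact setLIntegral_congr_fun measurableSet_Ioi fun t ht => by simp only [hmeas t ht]
  · have htop : μ {a | f a = ∞} ≠ 0 := by simpa only [ae_iff, not_not] using hfin
    have hleft : ∫⁻ a, f a ^ p ∂μ = ∞ :=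
      lintegral_eq_top_of_measure_eq_top_ne_zero (hf.pow_const p) <| by
        simpa only [ENNReal.rpow_eq_top_iff_of_pos hp] using htop
    have hright :
        ∫⁻ t in Ioi (0 : ℝ), μ {a | ENNReal.ofReal t < f a} * ENNReal.ofReal (t ^ (p - 1)) = ∞ := by
      rw [eq_top_iff]
      calc ∞ = μ {a | f a = ∞} * ∫⁻ t in Ioi (0 : ℝ), ENNReal.ofReal (t ^ (p - 1)) := by
            rw [lintegral_Ioi_zero_rpow_eq_top, ENNReal.mul_top htop]
        _ ≤ ∫⁻ t in Ioi (0 : ℝ), μ {a | f a = ∞} * ENNReal.ofReal (t ^ (p - 1)) :=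
            lintegral_const_mul_le _ _
        _ ≤ _ := by
            gcongr with t a
            intro ha
            exact ha ▸ ENNReal.ofReal_lt_top
    rw [hleft, hright, ENNReal.mul_top (ENNReal.ofReal_pos.2 hp).ne']

lemma lintegral_rpow_le_one_add_lintegral_tail [IsProbabilityMeasure μ] (hf : AEMeasurable f μ)
    {p : ℝ} (hp : 0 < p) :
    ∫⁻ a, f a ^ p ∂μ ≤ 1 + ENNReal.ofReal p *
      ∫⁻ t in Ioi (1 : ℝ), μ {a | ENNReal.ofReal t < f a} * ENNReal.ofReal (t ^ (p - 1)) := by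
  have hlow : ENNReal.ofReal p *
      ∫⁻ t in Ioc (0 : ℝ) 1, μ {a | ENNReal.ofReal t < f a} * ENNReal.ofReal (t ^ (p - 1)) ≤ 1 :=
    calc _ ≤ ENNReal.ofReal p * ∫⁻ t in Ioc (0 : ℝ) 1, ENNReal.ofReal (t ^ (p - 1)) := by
          gcongr with t
          exact mul_le_of_le_one_left' prob_le_one
      _ = 1 := by
          rw [lintegral_Ioc_zero_one_rpow_sub_one hp, ← ENNReal.ofReal_mul hp.le,
            mul_one_div_cancel hp.ne', ENNReal.ofReal_one]
  rw [lintegral_rpow_eq_lintegral_meas_ofReal_lt_mul hf hp, ← Ioc_union_Ioi_eq_Ioi zero_le_one,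
    lintegral_union measurableSet_Ioi (Ioc_disjoint_Ioi le_rfl), mul_add]
  gcongr

end LayerCake

section StretchedExponentialTail

lemma lintegral_exp_neg_mul_rpow_mul_rpow_sub_one {c lam mu q : ℝ} (hc : 0 ≤ c) (hlam : 0 < lam)
    (hmu : 0 < mu) (hq : 0 < q) :
    ∫⁻ t in Ioi (0 : ℝ),
        ENNReal.ofReal (c * Real.exp (-lam * t ^ mu)) * ENNReal.ofReal (t ^ (q - 1)) =
      ENNReal.ofReal (c * (lam ^ (-q / mu) * (1 / mu) * Real.Gamma (q / mu))) := by
  have hexp : -1 < q - 1 := by linarith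
  have hintegrable := (integrableOn_rpow_mul_exp_neg_mul_rpow hexp hmu hlam).const_mul c
  have hnonneg : 0 ≤ᵐ[volume.restrict (Ioi (0 : ℝ))]
      fun t => c * (t ^ (q - 1) * Real.exp (-lam * t ^ mu)) :=
    ae_restrict_of_forall_mem measurableSet_Ioi fun t ht =>
      mul_nonneg hc (mul_nonneg (Real.rpow_nonneg (le_of_lt ht) _) (Real.exp_nonneg _))
  calc _ = ∫⁻ t in Ioi (0 : ℝ),
        ENNReal.ofReal (c * (t ^ (q - 1) * Real.exp (-lam * t ^ mu))) :=
        lintegral_congr fun t => by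
          rw [← ENNReal.ofReal_mul (by positivity), mul_assoc, mul_comm (Real.exp _)]
    _ = _ := by
        rw [← ofReal_integral_eq_lintegral_ofReal hintegrable hnonneg, integral_const_mul,
          integral_rpow_mul_exp_neg_mul_rpow hmu hexp hlam, sub_add_cancel]

variable {Ω : Type*} [MeasurableSpace Ω] {P : Measure Ω} [IsProbabilityMeasure P]
  {c lam mu q : ℝ}

lemma lintegral_rpow_le_of_stretchedExp_tail (hc : 0 ≤ c) (hlam : 0 < lam) (hmu : 0 < mu)
    (hq : 0 < q) {X : Ω → ℝ≥0∞} (hX : AEMeasurable X P)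
    (htail : ∀ t : ℝ, 1 ≤ t →
      P {ω | ENNReal.ofReal t < X ω} ≤ ENNReal.ofReal (c * Real.exp (-lam * t ^ mu))) :
    ∫⁻ ω, X ω ^ q ∂P ≤
      ENNReal.ofReal (1 + c * lam ^ (-q / mu) * Real.Gamma (q / mu + 1)) := by
  have hq_mu : 0 < q / mu := div_pos hq hmu
  calc ∫⁻ ω, X ω ^ q ∂P
      ≤ 1 + ENNReal.ofReal q * ∫⁻ t in Ioi (1 : ℝ),
          P {ω | ENNReal.ofReal t < X ω} * ENNReal.ofReal (t ^ (q - 1)) :=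
        lintegral_rpow_le_one_add_lintegral_tail hX hq
    _ ≤ 1 + ENNReal.ofReal q * ∫⁻ t in Ioi (1 : ℝ),
          ENNReal.ofReal (c * Real.exp (-lam * t ^ mu)) * ENNReal.ofReal (t ^ (q - 1)) := by
        gcongr 1 + _ * ?_
        exact setLIntegral_mono' measurableSet_Ioi fun t ht => by
          gcongr
          exact htail t (le_of_lt ht)
    _ ≤ 1 + ENNReal.ofReal q * ∫⁻ t in Ioi (0 : ℝ),
          ENNReal.ofReal (c * Real.exp (-lam * t ^ mu)) * ENNReal.ofReal (t ^ (q - 1)) := by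
        gcongr
        exact zero_le_one
    _ = _ := by
        rw [lintegral_exp_neg_mul_rpow_mul_rpow_sub_one hc hlam hmu hq, ← ENNReal.ofReal_mul hq.le,
          ← ENNReal.ofReal_one, ← ENNReal.ofReal_add zero_le_one (by positivity),
          Real.Gamma_add_one hq_mu.ne']
        congr 1
        ring

lemma lintegral_rpow_le_of_stretchedExp_tail_scaled (hc : 0 ≤ c) (hlam : 0 < lam) (hmu : 0 < mu)
    (hq : 0 < q) {B : ℝ} (hB : 0 < B) {X : Ω → ℝ≥0∞} (hX : AEMeasurable X P)
    (htail : ∀ t : ℝ, 1 ≤ t →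
      P {ω | ENNReal.ofReal (B * t) < X ω} ≤ ENNReal.ofReal (c * Real.exp (-lam * t ^ mu))) :
    ∫⁻ ω, X ω ^ q ∂P ≤
      ENNReal.ofReal (B ^ q * (1 + c * lam ^ (-q / mu) * Real.Gamma (q / mu + 1))) := by
  have hB0 : ENNReal.ofReal B ≠ 0 := (ENNReal.ofReal_pos.2 hB).ne'
  have hB_top : ENNReal.ofReal B ≠ ∞ := ENNReal.ofReal_ne_top
  have htail_div (t : ℝ) (ht : 1 ≤ t) :
      P {ω | ENNReal.ofReal t < X ω / ENNReal.ofReal B} ≤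
        ENNReal.ofReal (c * Real.exp (-lam * t ^ mu)) := by
    simp only [ENNReal.lt_div_iff_mul_lt (.inl hB0) (.inl hB_top), mul_comm (ENNReal.ofReal t),
      ← ENNReal.ofReal_mul hB.le]
    exact htail t ht
  calc ∫⁻ ω, X ω ^ q ∂P
      = ∫⁻ ω, ENNReal.ofReal (B ^ q) * (X ω / ENNReal.ofReal B) ^ q ∂P :=
        lintegral_congr fun ω => by
          rw [← ENNReal.ofReal_rpow_of_pos hB, ← ENNReal.mul_rpow_of_nonneg _ _ hq.le,
            ENNReal.mul_div_cancel hB0 hB_top]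
    _ = ENNReal.ofReal (B ^ q) * ∫⁻ ω, (X ω / ENNReal.ofReal B) ^ q ∂P :=
        lintegral_const_mul' _ _ ENNReal.ofReal_ne_top
    _ ≤ ENNReal.ofReal (B ^ q) *
          ENNReal.ofReal (1 + c * lam ^ (-q / mu) * Real.Gamma (q / mu + 1)) := by
        gcongr
        exact lintegral_rpow_le_of_stretchedExp_tail hc hlam hmu hq (hX.div_const _) htail_div
    _ = _ := (ENNReal.ofReal_mul (by positivity)).symm

lemma stretchedExp_exponent_rescale {A r t : ℝ} (hA : A ≠ 0) (hr : 0 < r) (ht : 0 ≤ t)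
    (hmu : mu ≠ 0) :
    -lam * (A * (A⁻¹ * r ^ (2 / mu) * t)) ^ mu / r ^ 2 = -lam * t ^ mu := by
  have hpow : (r ^ (2 / mu)) ^ mu = r ^ 2 := by
    rw [← Real.rpow_mul hr.le, div_mul_cancel₀ _ hmu, Real.rpow_two]
  rw [mul_assoc A⁻¹, mul_inv_cancel_left₀ hA, Real.mul_rpow (by positivity) ht, hpow]
  field_simp

theorem inverse_moment_estimate_general (hc : 0 ≤ c) (hlam : 0 < lam) (hmu : 0 < mu) (hq : 0 < q)
    {A m : ℝ} (hA : 0 < A) (hm : 0 ≤ m) {Y : Ω → ℝ≥0∞} (hY : AEMeasurable Y P)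
    (htail : ∀ y : ℝ, 1 / A ≤ y → P {ω | Y ω < ENNReal.ofReal (1 / y)} ≤
      ENNReal.ofReal (c * Real.exp (-lam * (A * y) ^ mu / (1 + m) ^ 2))) :
    ∫⁻ ω, Y ω ^ (-q) ∂P ≤
      ENNReal.ofReal ((1 + c * lam ^ (-q / mu) * Real.Gamma (q / mu + 1)) *
        A ^ (-q) * (1 + m) ^ (2 * q / mu)) := by
  have hm1 : 0 < 1 + m := by linarith
  set B : ℝ := A⁻¹ * (1 + m) ^ (2 / mu) with hB_def
  have hB : 0 < B := by positivity
  have hB_rpow : B ^ q = A ^ (-q) * (1 + m) ^ (2 * q / mu) := by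
    rw [hB_def, Real.mul_rpow (by positivity) (by positivity), Real.inv_rpow hA.le,
      ← Real.rpow_neg hA.le, ← Real.rpow_mul hm1.le, div_mul_eq_mul_div]
  have hB_level (t : ℝ) (ht : 1 ≤ t) : 1 / A ≤ B * t := by
    have hone_le : 1 ≤ (1 + m) ^ (2 / mu) := Real.one_le_rpow (by linarith) (by positivity)
    rw [hB_def, one_div, mul_assoc]
    exact le_mul_of_one_le_right (by positivity) (one_le_mul_of_one_le_of_one_le hone_le ht)
  have htail_inv (t : ℝ) (ht : 1 ≤ t) :
      P {ω | ENNReal.ofReal (B * t) < (Y ω)⁻¹} ≤ ENNReal.ofReal (c * Real.exp (-lam * t ^ mu)) := by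
    have ht0 : 0 < t := by linarith
    have htail_Bt := htail (B * t) (hB_level t ht)
    rw [stretchedExp_exponent_rescale hA.ne' hm1 ht0.le hmu.ne', one_div,
      ENNReal.ofReal_inv_of_pos (by positivity)] at htail_Bt
    simpa only [ENNReal.lt_inv_iff_lt_inv] using htail_Bt
  calc ∫⁻ ω, Y ω ^ (-q) ∂P = ∫⁻ ω, (Y ω)⁻¹ ^ q ∂P := by
        simp only [ENNReal.rpow_neg, ENNReal.inv_rpow]
    _ ≤ ENNReal.ofReal (B ^ q * (1 + c * lam ^ (-q / mu) * Real.Gamma (q / mu + 1))) :=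
        lintegral_rpow_le_of_stretchedExp_tail_scaled hc hlam hmu hq hB hY.inv htail_inv
    _ = _ := by rw [mul_comm (B ^ q), hB_rpow, ← mul_assoc]

end StretchedExponentialTail

theorem inverse_moment_estimate
    (ctilde lam mu q : ℝ) (hc : 0 ≤ ctilde) (hlam : 0 < lam)
    (hmu0 : 0 < mu) (hmu1 : mu ≤ 1) (hq : 1 ≤ q) :
    ∃ C : ℝ, 0 < C ∧
      ∀ (Ω : Type) (mΩ : MeasurableSpace Ω) (P : Measure Ω),
        IsProbabilityMeasure P →
        ∀ A m : ℝ, 0 < A → A ≤ 1 → 0 ≤ m →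
        ∀ Y : Ω → ℝ, Measurable Y → (∀ ω, 0 ≤ Y ω) →
        (∀ y : ℝ, 1 / A ≤ y →
          P {ω | Y ω < 1 / y} ≤
            ENNReal.ofReal (ctilde * Real.exp (-lam * (A * y) ^ mu / (1 + m) ^ 2))) →
        ∫⁻ ω, (ENNReal.ofReal (Y ω)) ^ (-q) ∂P ≤
          ENNReal.ofReal (C * A ^ (-q) * (1 + m) ^ (2 * q / mu + 2)) := by
  have hq0 : 0 < q := by linarith
  refine ⟨1 + ctilde * lam ^ (-q / mu) * Real.Gamma (q / mu + 1), by positivity, ?_⟩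
  intro Ω mΩ P hP A m hA _ hm Y hY _ htail
  refine (inverse_moment_estimate_general hc hlam hmu0 hq0 hA hm hY.ennreal_ofReal.aemeasurable
    fun y hy => ?_).trans ?_
  · have hy0 : 0 < 1 / y := one_div_pos.2 ((one_div_pos.2 hA).trans_le hy)
    simpa only [ENNReal.ofReal_lt_ofReal_iff hy0] using htail y hy
  · gcongr <;> linarith
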